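/- Let β ∈ (1/2,1), T > 0, γ > 2, let φ : [0,T] → ℝ be β-Hölder continuous with φ(0) = 0, and suppose f satisfies assumptions (i), (ii) and (iii). Let x be the positive continuous solution of x_t = x₀ + ∫₀ᵗ f(s, x_s) ds + φ(t) on [0,T] with x₀ > 0, and set K_T = sup_{t∈[0,T]} h(t). Then there exist constants c₁ > 0 and c₂ > 0, depending only on β, γ, K_T and T, such that whenever 0 ≤ s < t ≤ T and t − s ≤ c₁ · min{ (1 + ‖φ‖_{0,T,β})^{−γ/(β(γ−1))}, (1 + ‖φ‖_{0,T,β})^{−1/β} }, one has sup_{r∈[s,t]} x_r^γ ≤ 2 x_s^γ + c₂. -/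

import Mathlib

/-!
The Hölder bound and the restriction `t - s ≤ (1 + ‖φ‖)^(-1/β)` give `|φ r - φ s| ≤ 1` for increments
inside `[s, t]`. Given `r ∈ [s, t]`, let `τ` be the last time in `[s, r]` at which `x ≤ 1`
(and `τ = s` if there is none). Between `τ` and `r` the solution stays above `1`, so the drift is at
most `2 M` there, and `x r ≤ x τ + 2 M T + 1 ≤ x s + C` with `C = 2 |M| T + 2`. The claim then follows
from the elementary inequality `(a + C)^γ ≤ 2 a^γ + c₂` (`exists_add_rpow_le_two_mul`).
Thus `c₁ = 1` suffices.
-/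

open Set MeasureTheory

/-- The supremum norm `‖x‖_{s,t,∞} = sup {|x r| : s ≤ r ≤ t}`. -/
noncomputable def supNorm (x : ℝ → ℝ) (s t : ℝ) : ℝ :=
  sSup ((fun r => |x r|) '' Set.Icc s t)

/-- The `β`-Hölder seminorm `‖x‖_{s,t,β} = sup {|x u − x v|/|u−v|^β : s ≤ u, v ≤ t, u ≠ v}`. -/
noncomputable def holderNorm (β : ℝ) (x : ℝ → ℝ) (s t : ℝ) : ℝ :=
  sSup {c : ℝ | ∃ u ∈ Set.Icc s t, ∃ v ∈ Set.Icc s t, u ≠ v ∧ c = |x u - x v| / |u - v| ^ β}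

/-- With `1 + δ = 2 ^ (1/γ)`, either `C ≤ δ a`, and then `(a + C)^γ ≤ 2 a^γ`, or `a < C / δ`. -/
lemma exists_add_rpow_le_two_mul (γ C : ℝ) (hγ : 0 < γ) (hC : 0 < C) :
    ∃ c > 0, ∀ a ≥ 0, (a + C) ^ γ ≤ 2 * a ^ γ + c := by
  set δ : ℝ := 2 ^ (1 / γ) - 1 with hδ
  have hδ0 : 0 < δ := by
    have := Real.one_lt_rpow (x := 2) (z := 1 / γ) (by norm_num) (by positivity)
    linarith
  refine ⟨(C / δ + C) ^ γ, by positivity, fun a ha => ?_⟩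
  have ha' : 0 ≤ a ^ γ := by positivity
  have hc' : 0 ≤ (C / δ + C) ^ γ := by positivity
  by_cases h : C ≤ δ * a
  · have h1 : (a + C) ^ γ ≤ (2 ^ (1 / γ) * a) ^ γ :=
      Real.rpow_le_rpow (by positivity) (by rw [hδ] at h; linarith) hγ.le
    rw [Real.mul_rpow (by positivity) ha, ← Real.rpow_mul (by norm_num),
      one_div_mul_cancel hγ.ne', Real.rpow_one] at h1
    linarith
  · have h2 : a ≤ C / δ := by rw [le_div_iff₀ hδ0]; linarith
    have h1 : (a + C) ^ γ ≤ (C / δ + C) ^ γ :=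
      Real.rpow_le_rpow (by positivity) (by linarith) hγ.le
    linarith

lemma holderNorm_nonneg (β : ℝ) (φ : ℝ → ℝ) (s t : ℝ) : 0 ≤ holderNorm β φ s t := by
  apply Real.sSup_nonneg
  rintro c ⟨u, -, v, -, -, rfl⟩
  positivity

lemma abs_sub_le_holderNorm {β T : ℝ} {φ : ℝ → ℝ}
    (hφ : ∃ C : ℝ, ∀ u ∈ Icc (0 : ℝ) T, ∀ v ∈ Icc (0 : ℝ) T, |φ u - φ v| ≤ C * |u - v| ^ β)
    {u v : ℝ} (hu : u ∈ Icc 0 T) (hv : v ∈ Icc 0 T) (huv : u ≠ v) :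
    |φ u - φ v| ≤ holderNorm β φ 0 T * |u - v| ^ β := by
  have pos {u v : ℝ} (h : u ≠ v) : 0 < |u - v| ^ β :=
    Real.rpow_pos_of_pos (abs_pos.2 (sub_ne_zero.2 h)) _
  rw [← div_le_iff₀ (pos huv)]
  obtain ⟨C, hC⟩ := hφ
  refine le_csSup ⟨C, ?_⟩ ⟨u, hu, v, hv, huv, rfl⟩
  rintro c ⟨u, hu, v, hv, huv, rfl⟩
  rw [div_le_iff₀ (pos huv)]
  exact hC u hu v hv

/-- On time scales of order `(1 + ‖φ‖)^(-1/β)` the driver oscillates by at most `1`. -/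
lemma sub_le_one_of_abs_sub_le {β T : ℝ} {φ : ℝ → ℝ} (hβ : 0 < β)
    (hφ : ∃ C : ℝ, ∀ u ∈ Icc (0 : ℝ) T, ∀ v ∈ Icc (0 : ℝ) T, |φ u - φ v| ≤ C * |u - v| ^ β)
    {u v : ℝ} (hu : u ∈ Icc 0 T) (hv : v ∈ Icc 0 T)
    (h : |u - v| ≤ (1 + holderNorm β φ 0 T) ^ (-(1 / β))) :
    φ u - φ v ≤ 1 := by
  rcases eq_or_ne u v with rfl | huv
  · simp
  have hN := holderNorm_nonneg β φ 0 T
  have h1 := abs_sub_le_holderNorm hφ hu hv huv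
  set N := holderNorm β φ 0 T
  have h2 : |u - v| ^ β ≤ (1 + N)⁻¹ := by
    have := Real.rpow_le_rpow (abs_nonneg _) h hβ.le
    rwa [← Real.rpow_mul (by positivity), neg_mul, one_div_mul_cancel hβ.ne',
      Real.rpow_neg_one] at this
  have h3 : N * |u - v| ^ β ≤ N * (1 + N)⁻¹ := mul_le_mul_of_nonneg_left h2 hN
  have h4 : N * (1 + N)⁻¹ ≤ 1 := by
    rw [← div_eq_mul_inv, div_le_one (by positivity)]; linarith
  linarith [le_abs_self (φ u - φ v)]

/-- The base point `τ` is the last time in `[s, r]` at which `x ≤ 1`, or `s` if there is none. -/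
lemma exists_last_le_one {x : ℝ → ℝ} {s r : ℝ} (hsr : s ≤ r) (hx : ContinuousOn x (Icc s r))
    (h0 : 0 < x s) :
    ∃ τ ∈ Icc s r, x τ ≤ x s + 1 ∧ ∀ u ∈ Ioo τ r, 1 < x u := by
  by_cases hne : (Icc s r ∩ x ⁻¹' Iic 1).Nonempty
  · have hcpt : IsCompact (Icc s r ∩ x ⁻¹' Iic 1) :=
      isCompact_Icc.of_isClosed_subset (hx.preimage_isClosed_of_isClosed isClosed_Icc isClosed_Iic)
        inter_subset_left
    obtain ⟨τ, ⟨hτ, hτ1⟩, hmax⟩ := hcpt.exists_isGreatest hne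
    refine ⟨τ, hτ, by linarith [show x τ ≤ 1 from hτ1], fun u hu => ?_⟩
    by_contra! hle
    exact hu.1.not_ge (hmax ⟨⟨hτ.1.trans hu.1.le, hu.2.le⟩, hle⟩)
  · refine ⟨s, left_mem_Icc.2 hsr, by linarith, fun u hu => ?_⟩
    by_contra! hle
    exact hne ⟨u, Ioo_subset_Icc_self hu, hle⟩

/-- **local supremum estimate for `y = x^γ`.**  Under assumptions (i)–(iii),
for the positive solution `x` of `x t = x₀ + ∫₀ᵗ f(s, x s) ds + φ t` on `[0,T]`, there are
constants `c₁, c₂ > 0` depending only on `β`, `γ`, `T` and an upper bound `M` of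
`K_T = sup_{[0,T]} h` (they are chosen before the data) such that whenever
`0 ≤ s < t ≤ T` and
`t − s ≤ c₁ · min{(1+‖φ‖_{0,T,β})^{−γ/(β(γ−1))}, (1+‖φ‖_{0,T,β})^{−1/β}}`,
one has `sup_{r∈[s,t]} (x r)^γ ≤ 2 (x s)^γ + c₂`. -/
theorem singular_ode_local_sup_estimate
    (β γ T M : ℝ) (hβ : β ∈ Set.Ioo (1/2 : ℝ) 1) (hγ : 2 < γ) (hT : 0 < T) :
    ∃ c₁ c₂ : ℝ, 0 < c₁ ∧ 0 < c₂ ∧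
      ∀ (f f' : ℝ → ℝ → ℝ) (g h : ℝ → ℝ) (x₁ α x₀ : ℝ) (φ x : ℝ → ℝ),
        -- assumption (i)
        (∀ t ≥ (0:ℝ), ∀ y > (0:ℝ), 0 ≤ f t y) →
        ContinuousOn (fun p : ℝ × ℝ => f p.1 p.2) (Set.Ici 0 ×ˢ Set.Ioi 0) →
        (∀ t ≥ (0:ℝ), ∀ y > (0:ℝ), HasDerivAt (fun z => f t z) (f' t y) y) →
        ContinuousOn (fun p : ℝ × ℝ => f' p.1 p.2) (Set.Ici 0 ×ˢ Set.Ioi 0) →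
        (∀ t > (0:ℝ), ∀ y > (0:ℝ), f' t y ≤ 0) →
        -- assumption (ii)
        0 < x₁ → 1/β - 1 < α →
        (∀ t ≥ (0:ℝ), 0 ≤ g t) → ContinuousOn g (Set.Ici 0) → (∀ t > (0:ℝ), 0 < g t) →
        (∀ t ≥ (0:ℝ), ∀ y : ℝ, 0 < y → y < x₁ → g t * y ^ (-α) ≤ f t y) →
        -- assumption (iii), with `K_T = sup h` bounded by `M` on `[0,T]`
        (∀ t ≥ (0:ℝ), 0 ≤ h t) →
        (∀ T' > (0:ℝ), ∃ M' : ℝ, ∀ t ∈ Set.Icc (0:ℝ) T', h t ≤ M') →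
        (∀ t ∈ Set.Icc (0:ℝ) T, h t ≤ M) →
        (∀ t ≥ (0:ℝ), ∀ y > (0:ℝ), f t y ≤ h t * (1 + 1/y)) →
        -- the driving path
        φ 0 = 0 →
        (∃ C : ℝ, ∀ u ∈ Set.Icc (0:ℝ) T, ∀ v ∈ Set.Icc (0:ℝ) T,
          |φ u - φ v| ≤ C * |u - v| ^ β) →
        -- the solution on `[0,T]`
        0 < x₀ →
        ContinuousOn x (Set.Icc 0 T) →
        (∀ t ∈ Set.Icc (0:ℝ) T, 0 < x t) →
        (∀ t ∈ Set.Icc (0:ℝ) T, x t = x₀ + (∫ s in (0:ℝ)..t, f s (x s)) + φ t) →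
        ∀ s t : ℝ, 0 ≤ s → s < t → t ≤ T →
          t - s ≤ c₁ * min ((1 + holderNorm β φ 0 T) ^ (-(γ / (β * (γ - 1)))))
                           ((1 + holderNorm β φ 0 T) ^ (-(1/β))) →
          sSup ((fun r => x r ^ γ) '' Set.Icc s t) ≤ 2 * x s ^ γ + c₂ := by
  obtain ⟨c₂, hc₂, hpow⟩ :=
    exists_add_rpow_le_two_mul γ (2 * |M| * T + 2) (by linarith) (by positivity)
  refine ⟨1, c₂, one_pos, hc₂, ?_⟩
  intro f f' g h x₁ α x₀ φ x _ hf _ _ _ _ _ _ _ _ _ _ _ hM hfh _ hφ _ hx hpos hsol s t hs hst htT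
    hstep
  have hβ0 : 0 < β := by linarith [hβ.1]
  rw [one_mul] at hstep
  have hstep' := hstep.trans (min_le_right _ _)
  have hcont : ContinuousOn (fun u => f u (x u)) (Icc 0 T) :=
    hf.comp (continuousOn_id.prodMk hx) fun u hu => ⟨hu.1, hpos u hu⟩
  have hint : ∀ a ∈ Icc 0 T, ∀ b ∈ Icc 0 T,
      IntervalIntegrable (fun u => f u (x u)) volume a b := fun a ha b hb =>
    (hcont.mono (uIcc_subset_Icc ha hb)).intervalIntegrable
  have h0 : (0 : ℝ) ∈ Icc 0 T := left_mem_Icc.2 hT.le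
  have hsT : s ∈ Icc 0 T := ⟨hs, hst.le.trans htT⟩
  refine csSup_le ((nonempty_Icc.2 hst.le).image _) ?_
  rintro _ ⟨r, hr, rfl⟩
  have hrT : r ∈ Icc 0 T := ⟨hs.trans hr.1, hr.2.trans htT⟩
  obtain ⟨τ, hτ, hxτ, hgt⟩ := exists_last_le_one hr.1
    (hx.mono (Icc_subset_Icc hsT.1 hrT.2)) (hpos s hsT)
  have hτT : τ ∈ Icc 0 T := ⟨hs.trans hτ.1, hτ.2.trans hrT.2⟩
  have hdrift : ∫ u in τ..r, f u (x u) ≤ 2 * |M| * T := by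
    calc ∫ u in τ..r, f u (x u) ≤ ∫ _u in τ..r, 2 * |M| := by
          refine intervalIntegral.integral_mono_on_of_le_Ioo hτ.2 (hint τ hτT r hrT)
            intervalIntegrable_const fun u hu => ?_
          have huT : u ∈ Icc 0 T := ⟨hτT.1.trans hu.1.le, hu.2.le.trans hrT.2⟩
          have h1 : 1 / x u ≤ 1 := by
            rw [div_le_one (hpos u huT)]
            exact (hgt u hu).le
          have h1' : 0 < 1 / x u := one_div_pos.2 (hpos u huT)
          have h2 : h u ≤ |M| := (hM u huT).trans (le_abs_self M)
          calc f u (x u) ≤ h u * (1 + 1 / x u) := hfh u huT.1 _ (hpos u huT)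
            _ ≤ |M| * (1 + 1) := by gcongr
            _ = 2 * |M| := by ring
      _ = 2 * |M| * (r - τ) := by
          rw [intervalIntegral.integral_const, smul_eq_mul, mul_comm]
      _ ≤ 2 * |M| * T := by
          gcongr
          linarith [hτT.1, hrT.2]
  have hdriver : φ r - φ τ ≤ 1 := by
    refine sub_le_one_of_abs_sub_le hβ0 hφ hrT hτT (le_trans ?_ hstep')
    rw [abs_of_nonneg (by linarith [hτ.2])]
    linarith [hτ.1, hr.2]
  have hxr : x r ≤ x s + (2 * |M| * T + 2) := by
    have hadd := intervalIntegral.integral_add_adjacent_intervals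
      (hint 0 h0 τ hτT) (hint τ hτT r hrT)
    linarith [hsol r hrT, hsol τ hτT]
  exact (Real.rpow_le_rpow (hpos r hrT).le hxr (by linarith)).trans (hpow _ (hpos s hsT).le)
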